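/- Let q ∈ ℂ with 0 < |q| < 1, let n ≥ 1 be an integer, and let a, c, b_1, …, b_n, d_1, …, d_n, x_1, …, x_n ∈ ℂ with a ≠ 0, x_j ≠ 0 and b_j ≠ 0 for all j, a ≠ q^{m+1} and b_j ≠ q^{m+1} for all integers m ≥ 0, c ≠ q^m and d_j ≠ q^m for all integers m, and let r be a real number with max(|c/a|, |x_1|, …, |x_n|) < r < min(1, |x_1 b_1/d_1|, …, |x_n b_n/d_n|). Then the multiple bilateral series ∑_{(k_1,…,k_n) ∈ ℤ^n} ((a;q)_{k_1+⋯+k_n} / (c;q)_{k_1+⋯+k_n}) · ∏_{j=1}^n (b_j;q)_{k_j} / (d_j;q)_{k_j} · x_j^{k_j} converges absolutely and equals (2πi)^{−1} ∮_{|t|=r} G(t) · dt/t, the contour being the positively oriented circle of radius r about the origin, where G(t) = [(q;q)_∞ (c/a;q)_∞ (at;q)_∞ (q/(at);q)_∞ / ((c;q)_∞ (q/a;q)_∞ (t;q)_∞ (c/(at);q)_∞)] · ∏_{j=1}^n (q;q)_∞ (d_j/b_j;q)_∞ (b_j x_j/t;q)_∞ (qt/(b_j x_j);q)_∞ / ((d_j;q)_∞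 (q/b_j;q)_∞ (x_j/t;q)_∞ (d_j t/(b_j x_j);q)_∞). -/

import Mathlib

open Finset

/-- The `q`-shifted factorial `(a;q)_n` for an arbitrary integer `n`. -/
noncomputable def qpoch (q a : ℂ) (n : ℤ) : ℂ :=
  if 0 ≤ n then ∏ i ∈ Finset.range n.toNat, (1 - a * q ^ (i : ℤ))
  else (∏ i ∈ Finset.range (-n).toNat, (1 - a * q ^ (n + (i : ℤ))))⁻¹

/-- The infinite `q`-shifted factorial `(a;q)_∞`. -/
noncomputable def qinf (q a : ℂ) : ℂ := ∏' i : ℕ, (1 - a * q ^ i)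

/-- General term of the multiple bilateral series. -/
noncomputable def bilateralTerm (q a c : ℂ) {n : ℕ} (b d x : Fin n → ℂ) :
    (Fin n → ℤ) → ℂ := fun k =>
  qpoch q a (∑ j, k j) / qpoch q c (∑ j, k j) *
    ∏ j, qpoch q (b j) (k j) / qpoch q (d j) (k j) * x j ^ k j

/-- The integrand of the contour-integral representation of the bilateral series. -/
noncomputable def bilateralIntegrand (q a c : ℂ) {n : ℕ} (b d x : Fin n → ℂ) (t : ℂ) : ℂ :=
  qinf q q * qinf q (c / a) * qinf q (a * t) * qinf q (q / (a * t)) /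
    (qinf q c * qinf q (q / a) * qinf q t * qinf q (c / (a * t))) *
    ∏ j, qinf q q * qinf q (d j / b j) * qinf q (b j * x j / t) * qinf q (q * t / (b j * x j)) /
      (qinf q (d j) * qinf q (q / b j) * qinf q (x j / t) * qinf q (d j * t / (b j * x j)))

/-!
On the circle `‖t‖ = r` each factor of the integrand is the product side of Ramanujan's `₁ψ₁`
summation, so the integrand is a product of absolutely convergent Laurent series: one in `t` and,
for every `j`, one in `t⁻¹`. Integrating against `dt / t` keeps the terms of total degree zero,
those in which the exponent of `t` is `k₁ + ⋯ + kₙ`, and these form the bilateral series.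

The `₁ψ₁` summation itself is the limit `n → ∞` of the `q`-Pfaff–Saalschütz sum of length `2n`,
shifted so as to be centred at `0`; Tannery's theorem applies because the additional factors
converge and are therefore bounded.
-/

open Filter Topology Complex Real

section Summation

lemma summable_of_tendsto_ratio {𝕜 E : Type*} [NormedField 𝕜] [NormedAddCommGroup E]
    [NormedSpace 𝕜 E] [CompleteSpace E] {f : ℕ → E} {g : ℕ → 𝕜} {l : 𝕜}
    (hf : ∀ n, f (n + 1) = g n • f n) (hg : Tendsto g atTop (𝓝 l)) (hl : ‖l‖ < 1) :
    Summable f := by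
  obtain ⟨ρ, hlρ, hρ⟩ := exists_between hl
  refine summable_of_ratio_norm_eventually_le hρ ?_
  filter_upwards [hg.norm.eventually_lt_const hlρ] with n hn
  rw [hf, norm_smul]
  gcongr

lemma tendsto_sum_Icc_mul {R : Type*} [NormedRing R] [CompleteSpace R] {α : ℤ → R}
    {φ ψ : ℕ → R} {A B : R} (hα : Summable fun k => ‖α k‖) (hφ : Tendsto φ atTop (𝓝 A))
    (hψ : Tendsto ψ atTop (𝓝 B)) :
    Tendsto (fun n : ℕ => ∑ k ∈ Icc (-n : ℤ) n, α k * (φ (n + k).toNat * ψ (n - k).toNat)) atTop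
      (𝓝 ((∑' k, α k) * (A * B))) := by
  obtain ⟨C, hC⟩ := (Metric.isBounded_range_of_tendsto φ hφ).exists_norm_le
  obtain ⟨D, hD⟩ := (Metric.isBounded_range_of_tendsto ψ hψ).exists_norm_le
  simp only [Set.forall_mem_range] at hC hD
  have hC0 : 0 ≤ C := (norm_nonneg _).trans (hC 0)
  simp only [sum_eq_tsum_indicator (L := .unconditional ℤ)]
  rw [← hα.of_norm.tsum_mul_right]
  refine tendsto_tsum_of_dominated_convergence (bound := fun k => ‖α k‖ * (C * D))
    (hα.mul_right _) (fun k => ?_) (.of_forall fun n k => ?_)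
  · have hadd : Tendsto (fun n : ℕ => ((n : ℤ) + k).toNat) atTop atTop :=
      tendsto_atTop.2 fun m => by
        filter_upwards [eventually_ge_atTop (m + k.natAbs)] with n hn
        omega
    have hsub : Tendsto (fun n : ℕ => ((n : ℤ) - k).toNat) atTop atTop :=
      tendsto_atTop.2 fun m => by
        filter_upwards [eventually_ge_atTop (m + k.natAbs)] with n hn
        omega
    refine (((hφ.comp hadd).mul (hψ.comp hsub)).const_mul (α k)).congr' ?_
    filter_upwards [eventually_ge_atTop k.natAbs] with n hn
    have hk : k ∈ (Icc (-n : ℤ) n : Set ℤ) := by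
      rw [mem_coe, mem_Icc]
      omega
    rw [Set.indicator_of_mem hk, Function.comp_apply, Function.comp_apply]
  · refine (norm_indicator_le_norm_self _ _).trans ?_
    grw [norm_mul_le, norm_mul_le, hC, hD]

lemma hasSum_mul_prod {ι κ 𝕜 : Type*} [RCLike 𝕜] {f : ι → 𝕜} {g : κ → 𝕜} {a b : 𝕜}
    (hf : HasSum f a) (hg : HasSum g b) : HasSum (fun p : ι × κ => f p.1 * g p.2) (a * b) :=
  hf.mul hg (summable_mul_of_summable_norm hf.summable.norm hg.summable.norm)

theorem hasSum_prod_pi_fin {𝕜 : Type*} [RCLike 𝕜] {n : ℕ} {κ : Fin n → Type*}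
    {f : ∀ i, κ i → 𝕜} {a : Fin n → 𝕜} (hf : ∀ i, HasSum (f i) (a i)) :
    HasSum (fun k : ∀ i, κ i => ∏ i, f i (k i)) (∏ i, a i) := by
  induction n with
  | zero => simp [hasSum_unique]
  | succ n ih =>
    rw [← (Fin.consEquiv κ).hasSum_iff, Fin.prod_univ_succ]
    convert! hasSum_mul_prod (hf 0) (ih fun i => hf i.succ) using 2 with p
    simp [Fin.prod_univ_succ]
theorem hasSum_prod_pi {ι 𝕜 : Type*} [Fintype ι] [RCLike 𝕜] {κ : ι → Type*}
    {f : ∀ i, κ i → 𝕜} {a : ι → 𝕜} (hf : ∀ i, HasSum (f i) (a i)) :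
    HasSum (fun k : ∀ i, κ i => ∏ i, f i (k i)) (∏ i, a i) := by
  let e := (Fintype.equivFin ι).symm
  rw [← (Equiv.piCongrLeft κ e).hasSum_iff, ← e.prod_comp]
  convert! hasSum_prod_pi_fin fun i => hf (e i) using 2 with k
  simp only [Function.comp_apply, ← e.prod_comp, Equiv.piCongrLeft_apply_apply]

end Summation

section LaurentCoefficient

lemma prod_zpow_eq_zpow_sum₀ {ι G₀ : Type*} [CommGroupWithZero G₀] {a : G₀} (ha : a ≠ 0)
    (s : Finset ι) (k : ι → ℤ) : ∏ i ∈ s, a ^ k i = a ^ ∑ i ∈ s, k i := by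
  classical
  induction s using Finset.induction_on with
  | empty => simp
  | insert i s hi ih => rw [prod_insert hi, sum_insert hi, zpow_add₀ ha, ih]

lemma circleIntegral_zpow_sub_one {R : ℝ} (hR : R ≠ 0) (k : ℤ) :
    ∮ t in C(0, R), t ^ (k - 1) = if k = 0 then 2 * π * I else 0 := by
  split_ifs with hk
  · simpa [hk] using circleIntegral.integral_sub_center_inv 0 hR
  · simpa using circleIntegral.integral_sub_zpow_of_ne (show k - 1 ≠ -1 by omega) 0 0 R

theorem hasSum_coeff_zero_of_hasSum_laurent {ι E : Type*} [Countable ι] [NormedAddCommGroup E]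
    [NormedSpace ℂ E] [CompleteSpace E] {C : ι → E} {e : ι → ℤ} {f : ℂ → E} {R : ℝ}
    (hR : 0 < R) (hC : Summable fun i => R ^ e i * ‖C i‖)
    (hf : ∀ t : ℂ, ‖t‖ = R → HasSum (fun i => t ^ e i • C i) (f t)) :
    HasSum (fun i => if e i = 0 then C i else 0)
      ((2 * π * I : ℂ)⁻¹ • ∮ t in C(0, R), t⁻¹ • f t) := by
  have hnorm (θ : ℝ) : ‖circleMap 0 R θ‖ = R := by simp [abs_of_pos hR]
  have hne (θ : ℝ) : circleMap 0 R θ ≠ 0 := circleMap_ne_center hR.ne'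
  have termwise : HasSum (fun i => ∮ t in C(0, R), t⁻¹ • t ^ e i • C i)
      (∮ t in C(0, R), t⁻¹ • f t) := by
    refine intervalIntegral.hasSum_integral_of_dominated_convergence
      (fun i _ => R ^ e i * ‖C i‖) (fun i => ?_) (fun i => ?_)
      (.of_forall fun _ _ => hC) intervalIntegrable_const ?_
    · simp only [deriv_circleMap]
      exact (by fun_prop (disch := simp [hne]) : Continuous _).aestronglyMeasurable
    · refine .of_forall fun θ _ => le_of_eq ?_
      simp only [deriv_circleMap, norm_smul, norm_mul, norm_inv, norm_zpow, hnorm, norm_I, mul_one]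
      rw [mul_inv_cancel_left₀ hR.ne']
    · exact .of_forall fun θ _ => ((hf _ (hnorm θ)).const_smul _).const_smul _
  convert! termwise.const_smul (2 * π * I : ℂ)⁻¹ using 2 with i
  have hterm : ∮ t in C(0, R), t⁻¹ • t ^ e i • C i = (∮ t in C(0, R), t ^ (e i - 1)) • C i := by
    rw [← circleIntegral.integral_smul_const]
    refine circleIntegral.integral_congr hR.le fun t ht => ?_
    have ht0 : t ≠ 0 := ne_zero_of_mem_sphere hR.ne' ⟨t, ht⟩
    rw [smul_smul, mul_comm, ← zpow_sub_one₀ ht0]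
  rw [hterm, circleIntegral_zpow_sub_one hR.ne']
  split_ifs with h
  · rw [inv_smul_smul₀ two_pi_I_ne_zero]
  · simp

theorem hasSum_diagonal_circleIntegral {ι : Type*} [Fintype ι] {α : ℤ → ℂ} {β : ι → ℤ → ℂ}
    {f : ℂ → ℂ} {g : ι → ℂ → ℂ} {R : ℝ} (hR : 0 < R)
    (hf : ∀ t : ℂ, ‖t‖ = R → HasSum (fun k => α k * t ^ k) (f t))
    (hg : ∀ i, ∀ t : ℂ, ‖t‖ = R → HasSum (fun k => β i k * t⁻¹ ^ k) (g i t)) :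
    HasSum (fun k : ι → ℤ => α (∑ i, k i) * ∏ i, β i (k i))
      ((2 * π * I)⁻¹ * ∮ t in C(0, R), f t * (∏ i, g i t) / t) := by
  let C : ℤ × (ι → ℤ) → ℂ := fun p => α p.1 * ∏ i, β i (p.2 i)
  let e : ℤ × (ι → ℤ) → ℤ := fun p => p.1 - ∑ i, p.2 i
  have expansion (t : ℂ) (ht : ‖t‖ = R) :
      HasSum (fun p => t ^ e p • C p) (f t * ∏ i, g i t) := by
    have ht0 : t ≠ 0 := norm_pos_iff.mp (ht ▸ hR)
    have hprod : HasSum (fun k : ι → ℤ => ∏ i, (β i (k i) * t⁻¹ ^ k i)) (∏ i, g i t) :=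
      hasSum_prod_pi (f := fun i k => β i k * t⁻¹ ^ k) fun i => hg i t ht
    convert! hasSum_mul_prod (hf t ht) hprod using 2 with p
    rw [prod_mul_distrib, prod_zpow_eq_zpow_sum₀ (inv_ne_zero ht0), inv_zpow, smul_eq_mul,
      zpow_sub₀ ht0]
    ring
  have hC : Summable fun p => R ^ e p * ‖C p‖ := by
    have hRnorm : ‖(R : ℂ)‖ = R := by simp [abs_of_pos hR]
    simpa only [norm_smul, norm_zpow, hRnorm] using (expansion R hRnorm).summable.norm
  have coefficient := hasSum_coeff_zero_of_hasSum_laurent hR hC expansion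
  have diagonal_injective : Function.Injective fun k : ι → ℤ => (∑ i, k i, k) :=
    fun k k' h => (Prod.ext_iff.mp h).2
  rw [← diagonal_injective.hasSum_iff] at coefficient
  · simpa [Function.comp_def, C, e, inv_mul_eq_div] using coefficient
  · refine fun p hp => if_neg fun hep => hp ⟨p.2, Prod.ext ?_ rfl⟩
    exact (sub_eq_zero.mp hep).symm

end LaurentCoefficient

section FinitePochhammer

/-- The `q`-shifted factorial `(a;q)_n` of natural index, over an arbitrary commutative ring. -/
def finQPoch {R : Type*} [CommRing R] (q a : R) (n : ℕ) : R := ∏ i ∈ range n, (1 - a * q ^ i)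

variable {R : Type*} [CommRing R] {K : Type*} [Field K]

@[simp]
lemma finQPoch_zero (q a : R) : finQPoch q a 0 = 1 := prod_range_zero _

lemma finQPoch_succ (q a : R) (n : ℕ) :
    finQPoch q a (n + 1) = finQPoch q a n * (1 - a * q ^ n) :=
  prod_range_succ _ n

lemma finQPoch_add (q a : R) (m n : ℕ) :
    finQPoch q a (m + n) = finQPoch q a m * finQPoch q (a * q ^ m) n := by
  simp only [finQPoch, prod_range_add, pow_add, mul_assoc]

lemma finQPoch_succ' (q a : R) (n : ℕ) :
    finQPoch q a (n + 1) = (1 - a) * finQPoch q (a * q) n := by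
  rw [add_comm, finQPoch_add, finQPoch_succ, finQPoch_zero, pow_zero, pow_one, mul_one, one_mul]

lemma one_sub_mul_zpow_ne_zero {q a : K} {m : ℤ} (h : a ≠ q ^ (-m)) : 1 - a * q ^ m ≠ 0 := by
  contrapose! h
  rw [zpow_neg]
  exact eq_inv_of_mul_eq_one_left (sub_eq_zero.mp h).symm

lemma one_sub_mul_pow_ne_zero {q a : K} (h : ∀ m : ℤ, a ≠ q ^ m) (i : ℕ) :
    1 - a * q ^ i ≠ 0 := by
  simpa only [zpow_natCast] using one_sub_mul_zpow_ne_zero (h (-i))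

lemma finQPoch_mul_zpow_neg_succ {q : K} (hq : q ≠ 0) (a : K) (n : ℕ) :
    finQPoch q (a * q ^ (-(n + 1 : ℤ))) (n + 1) =
      (1 - a * q ^ (-(n + 1 : ℤ))) * finQPoch q (a * q ^ (-(n : ℤ))) n := by
  rw [finQPoch_succ', mul_assoc a, ← zpow_add_one₀ hq, neg_add, neg_add_cancel_right]

lemma finQPoch_mul_zpow_neg_ne_zero {q a : K} (hq : q ≠ 0) (ha : ∀ m : ℕ, a ≠ q ^ (m + 1))
    (n : ℕ) : finQPoch q (a * q ^ (-(n : ℤ))) n ≠ 0 := by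
  induction n with
  | zero => simp
  | succ n ih =>
    push_cast
    rw [finQPoch_mul_zpow_neg_succ hq]
    refine mul_ne_zero (one_sub_mul_zpow_ne_zero ?_) ih
    rw [neg_neg]
    exact_mod_cast ha n

lemma finQPoch_mul_zpow_neg {q a : K} (hq : q ≠ 0) (ha : a ≠ 0) (n : ℕ) :
    finQPoch q (a * q ^ (-(n : ℤ))) n =
      a ^ n * (∏ i ∈ range n, -(q ^ (i + 1))⁻¹) * finQPoch q (q / a) n := by
  induction n with
  | zero => simp
  | succ n ih =>
    have factor : 1 - a * q ^ (-(n + 1 : ℤ)) = a * -(q ^ (n + 1))⁻¹ * (1 - q / a * q ^ n) := by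
      have hpow : q ^ (-(n + 1 : ℤ)) = (q ^ (n + 1))⁻¹ := by
        rw [zpow_neg]; norm_cast
      rw [hpow]
      field_simp
      ring
    push_cast
    rw [finQPoch_mul_zpow_neg_succ hq, ih, factor, prod_range_succ, finQPoch_succ, pow_succ]
    ring

end FinitePochhammer

section Saalschuetz

variable {K : Type*} [Field K] {q a b z : K}

/-- The term `(a)_j (b)_j z^j / ((abz)_j (q)_j) · (z)_l / (q)_l` of the `q`-Pfaff–Saalschütz sum
`∑_{j + l = N}`. It is the usual balanced `₃φ₂` term with the factors depending on `N - j` left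
unreversed. -/
def saalschuetzTerm (q a b z : K) (j l : ℕ) : K :=
  finQPoch q a j * finQPoch q b j * z ^ j / (finQPoch q (a * b * z) j * finQPoch q q j) *
    (finQPoch q z l / finQPoch q q l)

lemma saalschuetzTerm_succ_left (hq : ∀ i : ℕ, 1 - q * q ^ i ≠ 0)
    (habz : ∀ i : ℕ, 1 - a * b * z * q ^ i ≠ 0) (j l : ℕ) :
    saalschuetzTerm q a b z (j + 1) l * ((1 - q * q ^ j) * (1 - a * b * z * q ^ j)) =
      saalschuetzTerm q a b z j l * (z * (1 - a * q ^ j) * (1 - b * q ^ j)) := by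
  have hj := hq j
  have hj' := habz j
  simp only [saalschuetzTerm, finQPoch_succ, pow_succ z]
  generalize 1 - q * q ^ j = D, 1 - a * b * z * q ^ j = E at *
  field_simp

lemma saalschuetzTerm_succ_right (hq : ∀ i : ℕ, 1 - q * q ^ i ≠ 0) (j l : ℕ) :
    saalschuetzTerm q a b z j (l + 1) * (1 - q * q ^ l) =
      saalschuetzTerm q a b z j l * (1 - z * q ^ l) := by
  have hl := hq l
  simp only [saalschuetzTerm, finQPoch_succ]
  generalize 1 - q * q ^ l = D at *
  field_simp

-- With `S N` the full sum over `j + l = N`, the recurrence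
-- `S (N + 1) * ((1 - q * q ^ N) * (1 - a * b * z * q ^ N)) =`
-- `S N * ((1 - b * z * q ^ N) * (1 - a * z * q ^ N))`
-- telescopes in `j`; this is its partial sum over `j ≤ m` for `N = m + l`.
lemma sum_saalschuetzTerm_telescope (hq : ∀ i : ℕ, 1 - q * q ^ i ≠ 0)
    (habz : ∀ i : ℕ, 1 - a * b * z * q ^ i ≠ 0) (m l : ℕ) :
    ∑ j ∈ range (m + 1),
        (saalschuetzTerm q a b z j (m + l + 1 - j) *
            ((1 - q * q ^ (m + l)) * (1 - a * b * z * q ^ (m + l))) -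
          saalschuetzTerm q a b z j (m + l - j) *
            ((1 - b * z * q ^ (m + l)) * (1 - a * z * q ^ (m + l)))) =
      -(q ^ l * (z * (1 - a * q ^ m) * (1 - b * q ^ m)) * saalschuetzTerm q a b z m l) := by
  induction m generalizing l with
  | zero =>
    have hright := saalschuetzTerm_succ_right (a := a) (b := b) (z := z) hq 0 l
    simp only [zero_add, sum_range_one, Nat.sub_zero]
    linear_combination (1 - a * b * z * q ^ l) * hright
  | succ m ih =>
    have hleft := saalschuetzTerm_succ_left hq habz m (l + 1)
    have hright := saalschuetzTerm_succ_right (a := a) (b := b) (z := z) hq (m + 1) l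
    have hm := ih (l + 1)
    rw [show m + (l + 1) = m + 1 + l by ring] at hm
    rw [sum_range_succ, hm, show m + 1 + l + 1 - (m + 1) = l + 1 by omega, Nat.add_sub_cancel_left]
    linear_combination
      q ^ (l + 1) * hleft + (1 - a * b * z * q ^ (m + 1) * q ^ (m + 1 + l)) * hright

theorem sum_saalschuetzTerm (hq : ∀ i : ℕ, 1 - q * q ^ i ≠ 0)
    (habz : ∀ i : ℕ, 1 - a * b * z * q ^ i ≠ 0) (N : ℕ) :
    ∑ j ∈ range (N + 1), saalschuetzTerm q a b z j (N - j) =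
      finQPoch q (b * z) N * finQPoch q (a * z) N /
        (finQPoch q q N * finQPoch q (a * b * z) N) := by
  induction N with
  | zero => simp [saalschuetzTerm]
  | succ N ih =>
    have telescope := sum_saalschuetzTerm_telescope hq habz N 0
    have hlast := saalschuetzTerm_succ_left hq habz N 0
    have hN := hq N
    have hN' := habz N
    simp only [add_zero, pow_zero, one_mul, sum_sub_distrib, ← sum_mul, ih] at telescope
    have recurrence : (∑ j ∈ range (N + 2), saalschuetzTerm q a b z j (N + 1 - j)) *
        ((1 - q * q ^ N) * (1 - a * b * z * q ^ N)) =
        finQPoch q (b * z) N * finQPoch q (a * z) N /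
          (finQPoch q q N * finQPoch q (a * b * z) N) *
          ((1 - b * z * q ^ N) * (1 - a * z * q ^ N)) := by
      rw [sum_range_succ, Nat.sub_self]
      linear_combination telescope + hlast
    rw [eq_div_of_mul_eq (mul_ne_zero hN hN') recurrence]
    simp only [finQPoch_succ]
    field_simp

end Saalschuetz

section IntegerIndex

variable {q a c z : ℂ}

lemma qpoch_natCast (q a : ℂ) (n : ℕ) : qpoch q a n = finQPoch q a n := by
  simp [qpoch, finQPoch]

lemma qpoch_neg_natCast (hq : q ≠ 0) (a : ℂ) (n : ℕ) :
    qpoch q a (-n) = (finQPoch q (a * q ^ (-(n : ℤ))) n)⁻¹ := by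
  rcases n.eq_zero_or_pos with rfl | hn
  · simp [qpoch]
  · rw [qpoch, if_neg (by omega), finQPoch, neg_neg, Int.toNat_natCast]
    simp only [zpow_add₀ hq, zpow_natCast, mul_assoc]

lemma qpoch_add_one (hq : q ≠ 0) (ha : ∀ m : ℕ, a ≠ q ^ (m + 1)) (k : ℤ) :
    qpoch q a (k + 1) = qpoch q a k * (1 - a * q ^ k) := by
  obtain ⟨n, rfl⟩ | ⟨n, rfl⟩ : (∃ n : ℕ, k = n) ∨ ∃ n : ℕ, k = -(n + 1 : ℤ) := by
    rcases k with n | n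
    · exact .inl ⟨n, rfl⟩
    · exact .inr ⟨n, Int.negSucc_eq n⟩
  · have h := finQPoch_succ q a n
    rw [← qpoch_natCast, ← qpoch_natCast] at h
    exact_mod_cast h
  · have hn : 1 - a * q ^ (-(n + 1 : ℤ)) ≠ 0 :=
      one_sub_mul_zpow_ne_zero (by rw [neg_neg]; exact_mod_cast ha n)
    have hsucc := qpoch_neg_natCast hq a (n + 1)
    push_cast at hsucc
    rw [hsucc, finQPoch_mul_zpow_neg_succ hq, neg_add, neg_add_cancel_right,
      qpoch_neg_natCast hq, ← neg_add]
    field_simp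

lemma finQPoch_mul_zpow_neg_eq_mul_qpoch (hq : q ≠ 0) (ha : ∀ m : ℕ, a ≠ q ^ (m + 1))
    (n j : ℕ) :
    finQPoch q (a * q ^ (-(n : ℤ))) j =
      finQPoch q (a * q ^ (-(n : ℤ))) n * qpoch q a (j - n) := by
  induction j with
  | zero =>
    rw [Nat.cast_zero, zero_sub, qpoch_neg_natCast hq, finQPoch_zero,
      mul_inv_cancel₀ (finQPoch_mul_zpow_neg_ne_zero hq ha n)]
  | succ j ih =>
    have hpow : a * q ^ (-(n : ℤ)) * q ^ j = a * q ^ (j - n : ℤ) := by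
      rw [mul_assoc, ← zpow_natCast q j, ← zpow_add₀ hq, neg_add_eq_sub]
    rw [Nat.cast_add_one, add_sub_right_comm, qpoch_add_one hq ha, finQPoch_succ, ih, hpow,
      mul_assoc]

/-- The general term of Ramanujan's `₁ψ₁` series. -/
noncomputable def onePsiOneTerm (q a c z : ℂ) (k : ℤ) : ℂ :=
  qpoch q a k / qpoch q c k * z ^ k

lemma onePsiOneTerm_add_one (hq : q ≠ 0) (hz : z ≠ 0) (ha : ∀ m : ℕ, a ≠ q ^ (m + 1))
    (hc : ∀ m : ℕ, c ≠ q ^ (m + 1)) (k : ℤ) :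
    onePsiOneTerm q a c z (k + 1) =
      (1 - a * q ^ k) / (1 - c * q ^ k) * z * onePsiOneTerm q a c z k := by
  simp only [onePsiOneTerm, qpoch_add_one hq ha, qpoch_add_one hq hc, zpow_add_one₀ hz,
    div_eq_mul_inv, mul_inv]
  ring

lemma onePsiOneTerm_neg_succ (hq : q ≠ 0) (hz : z ≠ 0) (ha : ∀ m : ℕ, a ≠ q ^ (m + 1))
    (hc : ∀ m : ℕ, c ≠ q ^ (m + 1)) (n : ℕ) :
    onePsiOneTerm q a c z (-(n + 1 : ℤ)) =
      (q ^ (n + 1) - c) / (q ^ (n + 1) - a) * z⁻¹ * onePsiOneTerm q a c z (-n) := by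
  have hrec := onePsiOneTerm_add_one hq hz ha hc (-(n + 1 : ℤ))
  have hqn : q ^ (n + 1) ≠ 0 := pow_ne_zero _ hq
  have hpow : q ^ (-(n + 1 : ℤ)) = (q ^ (n + 1))⁻¹ := by rw [zpow_neg]; norm_cast
  have hfactor (y : ℂ) : 1 - y * (q ^ (n + 1))⁻¹ = (q ^ (n + 1) - y) / q ^ (n + 1) := by
    field_simp
  have han := sub_ne_zero.mpr (ha n).symm
  have hcn := sub_ne_zero.mpr (hc n).symm
  rw [neg_add, neg_add_cancel_right, ← neg_add, hpow, hfactor, hfactor] at hrec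
  rw [hrec]
  field_simp

end IntegerIndex

section InfinitePochhammer

variable {q a : ℂ}

lemma summable_norm_neg_mul_pow (hq1 : ‖q‖ < 1) (a : ℂ) :
    Summable fun i : ℕ => ‖-(a * q ^ i)‖ := by
  simpa only [norm_neg, norm_mul, norm_pow] using
    (summable_geometric_of_lt_one (norm_nonneg q) hq1).mul_left ‖a‖

lemma tendsto_finQPoch (hq1 : ‖q‖ < 1) (a : ℂ) :
    Tendsto (finQPoch q a) atTop (𝓝 (qinf q a)) := by
  have hmul := multipliable_one_add_of_summable (summable_norm_neg_mul_pow hq1 a)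
  simp only [← sub_eq_add_neg] at hmul
  exact hmul.tendsto_prod_tprod_nat

lemma qinf_ne_zero (hq1 : ‖q‖ < 1) (h : ∀ i : ℕ, 1 - a * q ^ i ≠ 0) : qinf q a ≠ 0 := by
  simpa only [qinf, ← sub_eq_add_neg] using tprod_one_add_ne_zero_of_summable
    (f := fun i : ℕ => -(a * q ^ i)) h (summable_norm_neg_mul_pow hq1 a)

lemma one_sub_mul_pow_ne_zero_of_norm_lt_one (hq1 : ‖q‖ < 1) (ha : ‖a‖ < 1) (i : ℕ) :
    1 - a * q ^ i ≠ 0 := by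
  refine sub_ne_zero.mpr fun h => ?_
  have hlt : ‖a * q ^ i‖ < 1 := by
    rw [norm_mul, norm_pow]
    exact mul_lt_one_of_nonneg_of_lt_one_left (norm_nonneg _) ha
      (pow_le_one₀ (norm_nonneg _) hq1.le)
  rw [← h, norm_one] at hlt
  exact hlt.false

lemma one_sub_div_mul_pow_ne_zero (ha0 : a ≠ 0) (ha : ∀ m : ℕ, a ≠ q ^ (m + 1)) (i : ℕ) :
    1 - q / a * q ^ i ≠ 0 := by
  rw [div_mul_eq_mul_div, ← pow_succ', sub_ne_zero, ne_comm, Ne, div_eq_one_iff_eq ha0]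
  exact (ha i).symm

end InfinitePochhammer

section RamanujanSum

variable {q a c z : ℂ}

lemma summable_onePsiOneTerm (hq : q ≠ 0) (hq1 : ‖q‖ < 1) (ha : ∀ m : ℕ, a ≠ q ^ (m + 1))
    (hc : ∀ m : ℤ, c ≠ q ^ m) (hz1 : ‖z‖ < 1) (hcz : ‖c‖ < ‖a * z‖) :
    Summable (onePsiOneTerm q a c z) := by
  obtain ⟨ha0, hz⟩ := mul_ne_zero_iff.mp (norm_pos_iff.mp ((norm_nonneg c).trans_lt hcz))
  have hc' (m : ℕ) : c ≠ q ^ (m + 1) := by exact_mod_cast hc (m + 1)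
  have hpow := tendsto_pow_atTop_nhds_zero_of_norm_lt_one hq1
  refine .of_nat_of_neg ?_ ?_
  · refine summable_of_tendsto_ratio (g := fun n => (1 - a * q ^ n) / (1 - c * q ^ n) * z)
      (fun n => ?_) ?_ hz1
    · simpa using onePsiOneTerm_add_one hq hz ha hc' n
    · simpa using (((hpow.const_mul a).const_sub 1).div ((hpow.const_mul c).const_sub 1)
        (by simp)).mul_const z
  · refine summable_of_tendsto_ratio
      (g := fun n => (q ^ (n + 1) - c) / (q ^ (n + 1) - a) * z⁻¹) (l := c / (a * z))
      (fun n => ?_) ?_ ?_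
    · simpa using onePsiOneTerm_neg_succ hq hz ha hc' n
    · have hpow_succ := hpow.comp (tendsto_add_atTop_nat 1)
      have hlim := ((hpow_succ.sub_const c).div (hpow_succ.sub_const a)
        (by simpa using ha0)).mul_const z⁻¹
      simpa [Function.comp_def, neg_div_neg_eq, ← div_eq_mul_inv, div_div] using hlim
    · rwa [norm_div, div_lt_one ((norm_nonneg c).trans_lt hcz)]

lemma saalschuetzTerm_shift (hq : q ≠ 0) (ha : ∀ m : ℕ, a ≠ q ^ (m + 1))
    (hc : ∀ m : ℕ, c ≠ q ^ (m + 1)) (ha0 : a ≠ 0) (hz : z ≠ 0) (n j l : ℕ) :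
    saalschuetzTerm q (a * q ^ (-(n : ℤ))) (c / (a * z)) z j l =
      finQPoch q (a * q ^ (-(n : ℤ))) n / finQPoch q (c * q ^ (-(n : ℤ))) n * z ^ n *
        (onePsiOneTerm q a c z (j - n) *
          (finQPoch q (c / (a * z)) j / finQPoch q q j *
            (finQPoch q z l / finQPoch q q l))) := by
  have hbase : a * q ^ (-(n : ℤ)) * (c / (a * z)) * z = c * q ^ (-(n : ℤ)) := by field_simp
  have hpow : z ^ j = z ^ n * z ^ (j - n : ℤ) := by
    rw [← zpow_natCast z n, ← zpow_add₀ hz, add_sub_cancel, zpow_natCast]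
  rw [saalschuetzTerm, hbase, finQPoch_mul_zpow_neg_eq_mul_qpoch hq ha,
    finQPoch_mul_zpow_neg_eq_mul_qpoch hq hc, hpow, onePsiOneTerm]
  simp only [div_eq_mul_inv, mul_inv]
  ring

lemma finQPoch_mul_zpow_neg_two_mul (hq : q ≠ 0) (y : ℂ) (n : ℕ) :
    finQPoch q (y * q ^ (-(n : ℤ))) (2 * n) =
      finQPoch q (y * q ^ (-(n : ℤ))) n * finQPoch q y n := by
  rw [two_mul, finQPoch_add, mul_assoc, ← zpow_natCast, ← zpow_add₀ hq, neg_add_cancel, zpow_zero,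
    mul_one]

/-- The value of the symmetric finite bilateral sum over `-n ≤ k ≤ n` that tends to Ramanujan's
`₁ψ₁` series, up to the factor `(z;q)_∞ (c/(az);q)_∞ / (q;q)_∞²`. -/
noncomputable def finRamanujanProduct (q a c z : ℂ) (n : ℕ) : ℂ :=
  finQPoch q (c / a) (2 * n) * finQPoch q (a * z) n * finQPoch q (q / (a * z)) n /
    (finQPoch q q (2 * n) * finQPoch q c n * finQPoch q (q / a) n)

-- The `q`-Saalschütz sum of length `2 * n` with `a` and `c` replaced by `a * q ^ (-n)` and
-- `c * q ^ (-n)`, which centres the summation range at `0`.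
lemma sum_range_onePsiOneTerm_mul (hq : q ≠ 0) (hqq : ∀ i : ℕ, 1 - q * q ^ i ≠ 0)
    (ha0 : a ≠ 0) (hz : z ≠ 0) (ha : ∀ m : ℕ, a ≠ q ^ (m + 1)) (hc : ∀ m : ℤ, c ≠ q ^ m)
    (n : ℕ) :
    ∑ j ∈ range (2 * n + 1), onePsiOneTerm q a c z (j - n) *
        (finQPoch q (c / (a * z)) j / finQPoch q q j *
          (finQPoch q z (2 * n - j) / finQPoch q q (2 * n - j))) =
      finRamanujanProduct q a c z n := by
  have hc' (m : ℕ) : c ≠ q ^ (m + 1) := by exact_mod_cast hc (m + 1)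
  have hbase : a * q ^ (-(n : ℤ)) * (c / (a * z)) * z = c * q ^ (-(n : ℤ)) := by field_simp
  have habz (i : ℕ) : 1 - a * q ^ (-(n : ℤ)) * (c / (a * z)) * z * q ^ i ≠ 0 := by
    have hshift := one_sub_mul_zpow_ne_zero (m := -(n : ℤ) + i) (hc _)
    rwa [zpow_add₀ hq, zpow_natCast, ← mul_assoc, ← hbase] at hshift
  have hA := finQPoch_mul_zpow_neg_ne_zero hq ha n
  have hC := finQPoch_mul_zpow_neg_ne_zero hq hc' n
  have hczz : c / (a * z) * z = c / a := by field_simp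
  have saal := sum_saalschuetzTerm hqq habz (2 * n)
  simp only [saalschuetzTerm_shift hq ha hc' ha0 hz, ← mul_sum] at saal
  rw [hczz, hbase, mul_right_comm a _ z, finQPoch_mul_zpow_neg_two_mul hq,
    finQPoch_mul_zpow_neg_two_mul hq] at saal
  refine mul_left_cancel₀ (mul_ne_zero (div_ne_zero hA hC) (pow_ne_zero n hz)) (saal.trans ?_)
  rw [finQPoch_mul_zpow_neg hq ha0] at hA ⊢
  rw [finRamanujanProduct, finQPoch_mul_zpow_neg hq (mul_ne_zero ha0 hz), mul_pow]
  have hqa := right_ne_zero_of_mul hA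
  generalize finQPoch q (c * q ^ (-(n : ℤ))) n = C at *
  generalize ∏ i ∈ range n, (-(q ^ (i + 1))⁻¹) = P at *
  field_simp

lemma sum_Icc_onePsiOneTerm_mul (hq : q ≠ 0) (hqq : ∀ i : ℕ, 1 - q * q ^ i ≠ 0)
    (ha0 : a ≠ 0) (hz : z ≠ 0) (ha : ∀ m : ℕ, a ≠ q ^ (m + 1)) (hc : ∀ m : ℤ, c ≠ q ^ m)
    (n : ℕ) :
    ∑ k ∈ Icc (-n : ℤ) n, onePsiOneTerm q a c z k *
        (finQPoch q (c / (a * z)) (n + k).toNat / finQPoch q q (n + k).toNat *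
          (finQPoch q z (n - k).toNat / finQPoch q q (n - k).toNat)) =
      finRamanujanProduct q a c z n := by
  rw [← sum_range_onePsiOneTerm_mul hq hqq ha0 hz ha hc]
  refine sum_nbij' (fun k => (n + k).toNat) (fun j => (j - n : ℤ)) ?_ ?_ ?_ ?_ fun k hk => ?_
  iterate 4
    intro _ h
    simp only [mem_Icc, mem_range] at h ⊢
    omega
  rw [mem_Icc] at hk
  have hsub : 2 * n - (n + k).toNat = (n - k).toNat := by omega
  have hadd : (((n + k).toNat : ℤ) - n) = k := by omega
  rw [hsub, hadd]

/-- The product side of Ramanujan's `₁ψ₁` summation. -/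
noncomputable def ramanujanProduct (q a c z : ℂ) : ℂ :=
  qinf q q * qinf q (c / a) * qinf q (a * z) * qinf q (q / (a * z)) /
    (qinf q c * qinf q (q / a) * qinf q z * qinf q (c / (a * z)))

lemma tendsto_finRamanujanProduct (hq1 : ‖q‖ < 1) (ha0 : a ≠ 0)
    (ha : ∀ m : ℕ, a ≠ q ^ (m + 1)) (hc : ∀ m : ℤ, c ≠ q ^ m) :
    Tendsto (finRamanujanProduct q a c z) atTop
      (𝓝 (qinf q (c / a) * qinf q (a * z) * qinf q (q / (a * z)) /
        (qinf q q * qinf q c * qinf q (q / a)))) := by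
  have hdouble : Tendsto (fun n : ℕ => 2 * n) atTop atTop :=
    tendsto_id.const_mul_atTop' two_pos
  have hqinf (y : ℂ) := tendsto_finQPoch hq1 y
  exact ((((hqinf _).comp hdouble).mul (hqinf _)).mul (hqinf _)).div
    ((((hqinf _).comp hdouble).mul (hqinf _)).mul (hqinf _)) (mul_ne_zero (mul_ne_zero
      (qinf_ne_zero hq1 (one_sub_mul_pow_ne_zero_of_norm_lt_one hq1 hq1))
      (qinf_ne_zero hq1 (one_sub_mul_pow_ne_zero hc)))
      (qinf_ne_zero hq1 (one_sub_div_mul_pow_ne_zero ha0 ha)))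

theorem hasSum_onePsiOneTerm (hq : q ≠ 0) (hq1 : ‖q‖ < 1) (ha : ∀ m : ℕ, a ≠ q ^ (m + 1))
    (hc : ∀ m : ℤ, c ≠ q ^ m) (hz1 : ‖z‖ < 1) (hcz : ‖c‖ < ‖a * z‖) :
    HasSum (onePsiOneTerm q a c z) (ramanujanProduct q a c z) := by
  have haz := (norm_nonneg c).trans_lt hcz
  obtain ⟨ha0, hz⟩ := mul_ne_zero_iff.mp (norm_pos_iff.mp haz)
  have hcaz1 : ‖c / (a * z)‖ < 1 := by rwa [norm_div, div_lt_one haz]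
  have hqq := one_sub_mul_pow_ne_zero_of_norm_lt_one hq1 hq1
  have hqinf_q := qinf_ne_zero hq1 hqq
  have hqinf_z := qinf_ne_zero hq1 (one_sub_mul_pow_ne_zero_of_norm_lt_one hq1 hz1)
  have hqinf_caz := qinf_ne_zero hq1 (one_sub_mul_pow_ne_zero_of_norm_lt_one hq1 hcaz1)
  have summable := summable_onePsiOneTerm hq hq1 ha hc hz1 hcz
  have htsum := tendsto_sum_Icc_mul summable.norm
    ((tendsto_finQPoch hq1 (c / (a * z))).div (tendsto_finQPoch hq1 q) hqinf_q)
    ((tendsto_finQPoch hq1 z).div (tendsto_finQPoch hq1 q) hqinf_q)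
  simp only [Pi.div_apply, sum_Icc_onePsiOneTerm_mul hq hqq ha0 hz ha hc] at htsum
  have hlimits := tendsto_nhds_unique htsum (tendsto_finRamanujanProduct hq1 ha0 ha hc)
  rw [summable.hasSum_iff, ramanujanProduct, eq_div_of_mul_eq (by positivity) hlimits]
  generalize qinf q (c / (a * z)) = B, qinf q (q / (a * z)) = B', qinf q (q / a) = A at *
  field_simp

end RamanujanSum

section ContourIntegral

lemma bilateralIntegrand_eq (q a c : ℂ) {n : ℕ} (b d x : Fin n → ℂ) (t : ℂ) :
    bilateralIntegrand q a c b d x t =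
      ramanujanProduct q a c t * ∏ j, ramanujanProduct q (b j) (d j) (x j / t) := by
  simp only [bilateralIntegrand, ramanujanProduct, mul_div_assoc', div_div_eq_mul_div]

lemma hasSum_qpoch_div_mul_zpow {q a c t : ℂ} (hq : q ≠ 0) (hq1 : ‖q‖ < 1) (ha0 : a ≠ 0)
    (ha : ∀ m : ℕ, a ≠ q ^ (m + 1)) (hc : ∀ m : ℤ, c ≠ q ^ m) (hcat : ‖c / a‖ < ‖t‖)
    (ht1 : ‖t‖ < 1) :
    HasSum (fun k => qpoch q a k / qpoch q c k * t ^ k) (ramanujanProduct q a c t) := by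
  refine hasSum_onePsiOneTerm hq hq1 ha hc ht1 ?_
  rwa [norm_mul, ← div_lt_iff₀' (norm_pos_iff.mpr ha0), ← norm_div]

lemma hasSum_qpoch_div_mul_inv_zpow {q b d x t : ℂ} (hq : q ≠ 0) (hq1 : ‖q‖ < 1)
    (hb : ∀ m : ℕ, b ≠ q ^ (m + 1)) (hd : ∀ m : ℤ, d ≠ q ^ m) (hxt : ‖x‖ < ‖t‖)
    (htd : ‖t‖ < ‖x * b / d‖) :
    HasSum (fun k => qpoch q b k / qpoch q d k * x ^ k * t⁻¹ ^ k)
      (ramanujanProduct q b d (x / t)) := by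
  have ht : 0 < ‖t‖ := (norm_nonneg x).trans_lt hxt
  have hd0 : 0 < ‖d‖ := norm_pos_iff.mpr fun h => by
    rw [h, div_zero, norm_zero] at htd
    exact htd.not_gt ht
  have hxt1 : ‖x / t‖ < 1 := by rwa [norm_div, div_lt_one ht]
  have hdbxt : ‖d‖ < ‖b * (x / t)‖ := by
    rwa [mul_div_assoc', mul_comm b, norm_div, lt_div_comm₀ hd0 ht, ← norm_div]
  convert! hasSum_onePsiOneTerm hq hq1 hb hd hxt1 hdbxt using 2 with k
  rw [onePsiOneTerm, div_eq_mul_inv x, mul_zpow, mul_assoc]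

end ContourIntegral

theorem bilateral_sum_eq_contour_integral (q a c : ℂ) (n : ℕ) (hn : 1 ≤ n)
    (b d x : Fin n → ℂ) (r : ℝ)
    (hq0 : 0 < ‖q‖) (hq1 : ‖q‖ < 1)
    (ha : a ≠ 0) (hx : ∀ j, x j ≠ 0) (hb : ∀ j, b j ≠ 0)
    (haq : ∀ m : ℕ, a ≠ q ^ (m + 1))
    (hbq : ∀ j, ∀ m : ℕ, b j ≠ q ^ (m + 1))
    (hcq : ∀ m : ℤ, c ≠ q ^ m)
    (hdq : ∀ j, ∀ m : ℤ, d j ≠ q ^ m)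
    (hrca : ‖c / a‖ < r) (hrx : ∀ j, ‖x j‖ < r)
    (hr1 : r < 1) (hrd : ∀ j, r < ‖x j * b j / d j‖) :
    Summable (fun k : Fin n → ℤ => ‖bilateralTerm q a c b d x k‖) ∧
    (∑' k : Fin n → ℤ, bilateralTerm q a c b d x k) =
      (2 * (Real.pi : ℂ) * Complex.I)⁻¹ *
        ∮ t in C(0, r), bilateralIntegrand q a c b d x t / t := by
  have hq : q ≠ 0 := norm_pos_iff.mp hq0
  have hr : 0 < r := (norm_nonneg _).trans_lt hrca
  have expansion : HasSum (bilateralTerm q a c b d x) ((2 * π * I)⁻¹ *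
      ∮ t in C(0, r), ramanujanProduct q a c t *
        (∏ j, ramanujanProduct q (b j) (d j) (x j / t)) / t) := by
    refine hasSum_diagonal_circleIntegral (α := fun k => qpoch q a k / qpoch q c k)
      (β := fun j k => qpoch q (b j) k / qpoch q (d j) k * x j ^ k) hr ?_ ?_
    · rintro t rfl
      exact hasSum_qpoch_div_mul_zpow hq hq1 ha haq hcq hrca hr1
    · rintro j t rfl
      exact hasSum_qpoch_div_mul_inv_zpow hq hq1 (hbq j) (hdq j) (hrx j) (hrd j)
  simp only [bilateralIntegrand_eq]
  exact ⟨expansion.summable.norm, expansion.tsum_eq⟩
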